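/- arXiv:2605.09130 — 4 statements merged into one kernel-verified Lean document; each statement's English description precedes it below -/
import Mathlib

section
/- Let R = F2[x,y,z]/(xy + xz + yz). The images in R of the monomials x^i z^j for i, j ≥ 0, together with the images of the monomials y^m z^n for m ≥ 1, n ≥ 0, form a basis of R as an F2-vector space. -/
/-!
STATEMENT 0: Let `R = F2[x,y,z]/(xy + xz + yz)`.  The images in `R` of the monomials
`x^i z^j` for `i, j ≥ 0`, together with the images of the monomials `y^m z^n` for
`m ≥ 1, n ≥ 0`, form a basis of `R` as an `F2`-vector space.
-/

noncomputable section

open MvPolynomial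

/-- The field with two elements. -/
abbrev F2 : Type := ZMod 2

/-- The polynomial ring `F2[x,y,z]`, with `x = X 0`, `y = X 1`, `z = X 2`. -/
abbrev P3 : Type := MvPolynomial (Fin 3) F2

/-- The relation `xy + xz + yz`. -/
def relP : P3 := X 0 * X 1 + X 0 * X 2 + X 1 * X 2

/-- The ring `R = F2[x,y,z]/(xy + xz + yz)`. -/
abbrev Rring : Type := P3 ⧸ Ideal.span {relP}

/-- The quotient map `F2[x,y,z] → R`. -/
def pr : P3 →ₐ[F2] Rring := Ideal.Quotient.mkₐ F2 (Ideal.span {relP})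

/-- The family of images in `R` of the monomials `x^i z^j` (`i, j ≥ 0`) and
`y^m z^n` (`m ≥ 1`, `n ≥ 0`, encoded as `m = m' + 1` with `m' ≥ 0`). -/
def basisFam : (ℕ × ℕ) ⊕ (ℕ × ℕ) → Rring
  | .inl (i, j) => pr (X 0 ^ i * X 2 ^ j)
  | .inr (m, n) => pr (X 1 ^ (m + 1) * X 2 ^ n)

/-!
In the lexicographic order with `x > y > z` the leading monomial of `xy + xz + yz` is `xy`, with
coefficient `1`. Division with remainder by a polynomial `f` with invertible leading coefficient
leaves a remainder supported on monomials not divisible by the leading monomial of `f`, whereas a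
nonzero multiple of `f` has leading monomial divisible by that of `f`. So the possible remainders
form a complement of the ideal `(f)`. The monomials not divisible by `xy` are the `x^i z^j` and the
`y^(m+1) z^n`.
-/

theorem coe_basisRestrictSupport_apply {σ k : Type*} [CommSemiring k] {s : Set (σ →₀ ℕ)} (d : s) :
    (basisRestrictSupport k s d : MvPolynomial σ k) = monomial d 1 :=
  congrArg AddMonoidAlgebra.ofCoeff (Finsupp.supportedEquivFinsupp_symm_single s d (1 : k))

section StandardMonomials

/-- The exponents of the standard monomials of `f` with respect to the monomial order `m`, that is,
of the monomials not divisible by the leading monomial of `f`. -/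
def standardExponents {σ k : Type*} [CommSemiring k] (m : MonomialOrder σ) (f : MvPolynomial σ k) :
    Set (σ →₀ ℕ) :=
  {d | ¬m.degree f ≤ d}

variable {σ k : Type*} [CommRing k] {m : MonomialOrder σ} {f : MvPolynomial σ k}

theorem disjoint_span_singleton_restrictSupport_standardExponents
    (hf : m.leadingCoeff f ∈ nonZeroDivisors k) :
    Disjoint ((Ideal.span {f}).restrictScalars k) (restrictSupport k (standardExponents m f)) := by
  rw [Submodule.disjoint_def]
  intro p hp_mem hp_support
  obtain ⟨g, rfl⟩ := Ideal.mem_span_singleton.mp hp_mem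
  by_contra hfg
  have hg : g ≠ 0 := right_ne_zero_of_mul hfg
  have hdegree : m.degree (f * g) = m.degree f + m.degree g :=
    MonomialOrder.degree_mul_of_left_mem_nonZeroDivisors hf hg
  have hstandard : m.degree (f * g) ∈ standardExponents m f :=
    hp_support (m.degree_mem_support hfg)
  exact hstandard (hdegree ▸ le_self_add)

theorem codisjoint_span_singleton_restrictSupport_standardExponents
    (hf : IsUnit (m.leadingCoeff f)) :
    Codisjoint ((Ideal.span {f}).restrictScalars k)
      (restrictSupport k (standardExponents m f)) := by
  rw [Submodule.codisjoint_iff_exists_add_eq]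
  intro p
  obtain ⟨q, r, hp, -, hr⟩ := m.div_single hf p
  exact ⟨q * f, r, Ideal.mul_mem_left _ q (Ideal.mem_span_singleton_self f), hr, hp.symm⟩

theorem isCompl_span_singleton_restrictSupport_standardExponents
    (hf : IsUnit (m.leadingCoeff f)) :
    IsCompl ((Ideal.span {f}).restrictScalars k) (restrictSupport k (standardExponents m f)) :=
  ⟨disjoint_span_singleton_restrictSupport_standardExponents hf.mem_nonZeroDivisors,
    codisjoint_span_singleton_restrictSupport_standardExponents hf⟩

/-- The basis of `k[σ]/(f)` consisting of the images of the standard monomials of `f`, for `f` with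
invertible leading coefficient. -/
def standardMonomialBasis (hf : IsUnit (m.leadingCoeff f)) :
    Module.Basis (standardExponents m f) k (MvPolynomial σ k ⧸ Ideal.span {f}) :=
  (basisRestrictSupport k (standardExponents m f)).map
    (Submodule.quotientEquivOfIsCompl _ _
      (isCompl_span_singleton_restrictSupport_standardExponents hf)).symm

theorem standardMonomialBasis_apply (hf : IsUnit (m.leadingCoeff f)) (d : standardExponents m f) :
    standardMonomialBasis hf d = Ideal.Quotient.mk (Ideal.span {f}) (monomial d 1) := by
  rw [← coe_basisRestrictSupport_apply]
  rfl

end StandardMonomials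

section LexLeadingTerm

open MonomialOrder

variable {σ k : Type*} [CommSemiring k] [Nontrivial k]

theorem degree_X_mul_X (m : MonomialOrder σ) (i j : σ) :
    m.degree (X i * X j : MvPolynomial σ k) = Finsupp.single i 1 + Finsupp.single j 1 := by
  classical
  rw [X, X, monomial_mul, one_mul, m.degree_monomial, if_neg one_ne_zero]

variable [LinearOrder σ] [WellFoundedGT σ] {a b c : σ}

theorem lex_degree_X_mul_X_lt (a : σ) (hbc : b < c) :
    lex.degree (X a * X c : MvPolynomial σ k) ≺[lex]
      lex.degree (X a * X b : MvPolynomial σ k) := by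
  rw [degree_X_mul_X, degree_X_mul_X, map_add, map_add]
  gcongr
  exact Finsupp.Lex.single_lt_iff.mpr hbc

theorem lex_degree_X_mul_X_add_X_mul_X_lt (hab : a < b) (hbc : b < c) :
    lex.degree (X a * X c + X b * X c : MvPolynomial σ k) ≺[lex]
      lex.degree (X a * X b : MvPolynomial σ k) := by
  refine degree_add_le.trans_lt (max_lt (lex_degree_X_mul_X_lt a hbc) ?_)
  rw [mul_comm (X a)]
  exact lex_degree_X_mul_X_lt b (hab.trans hbc)

theorem lex_degree_pairwise_products (hab : a < b) (hbc : b < c) :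
    lex.degree (X a * X b + X a * X c + X b * X c : MvPolynomial σ k) =
      Finsupp.single a 1 + Finsupp.single b 1 := by
  rw [add_assoc, degree_add_of_lt (lex_degree_X_mul_X_add_X_mul_X_lt hab hbc), degree_X_mul_X]

theorem lex_monic_pairwise_products (hab : a < b) (hbc : b < c) :
    lex.Monic (X a * X b + X a * X c + X b * X c : MvPolynomial σ k) := by
  rw [add_assoc]
  exact (monic_X.mul monic_X).add_of_lt (lex_degree_X_mul_X_add_X_mul_X_lt hab hbc)

end LexLeadingTerm

theorem single_add_single_le_iff {σ : Type*} {i j : σ} (hij : i ≠ j) {d : σ →₀ ℕ} :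
    Finsupp.single i 1 + Finsupp.single j 1 ≤ d ↔ d i ≠ 0 ∧ d j ≠ 0 := by
  classical
  simp only [Finsupp.le_def, Finsupp.add_apply, Finsupp.single_apply]
  grind

section XYFree

/-- The exponents of the monomials `x^i z^j` and `y^(m+1) z^n` in `k[x,y,z]`, indexed as in
`basisFam`. -/
def xyFreeExponent : (ℕ × ℕ) ⊕ (ℕ × ℕ) → (Fin 3 →₀ ℕ)
  | .inl (i, j) => Finsupp.single 0 i + Finsupp.single 2 j
  | .inr (m, n) => Finsupp.single 1 (m + 1) + Finsupp.single 2 n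

theorem xyFreeExponent_injective : Function.Injective xyFreeExponent := by
  rintro (⟨i, j⟩ | ⟨m, n⟩) (⟨i', j'⟩ | ⟨m', n'⟩) h <;>
    simp_all [xyFreeExponent, Finsupp.ext_iff, Fin.forall_fin_succ]

theorem range_xyFreeExponent :
    Set.range xyFreeExponent = {d | ¬Finsupp.single 0 1 + Finsupp.single 1 1 ≤ d} := by
  ext d
  rw [Set.mem_ofPred_eq, single_add_single_le_iff zero_ne_one, not_and_or, not_ne_iff, not_ne_iff]
  constructor
  · rintro ⟨⟨i, j⟩ | ⟨m, n⟩, rfl⟩ <;> simp [xyFreeExponent]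
  · intro hd
    rcases Nat.eq_zero_or_pos (d 1) with hy | hy
    · exact ⟨.inl (d 0, d 2), by ext s; fin_cases s <;> simp [xyFreeExponent, hy]⟩
    · have hx : d 0 = 0 := hd.resolve_right hy.ne'
      exact ⟨.inr (d 1 - 1, d 2), by
        ext s; fin_cases s <;> simp [xyFreeExponent, hx, Nat.sub_add_cancel hy]⟩

variable {k : Type*}

theorem monomial_xyFreeExponent_inl [CommSemiring k] (i j : ℕ) :
    (monomial (xyFreeExponent (.inl (i, j))) 1 : MvPolynomial (Fin 3) k) = X 0 ^ i * X 2 ^ j := by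
  simp only [xyFreeExponent, X_pow_eq_monomial, monomial_mul, one_mul]

theorem monomial_xyFreeExponent_inr [CommSemiring k] (m n : ℕ) :
    (monomial (xyFreeExponent (.inr (m, n))) 1 : MvPolynomial (Fin 3) k) =
      X 1 ^ (m + 1) * X 2 ^ n := by
  simp only [xyFreeExponent, X_pow_eq_monomial, monomial_mul, one_mul]

theorem images_of_monomials_form_basis_general [CommRing k] {ord : MonomialOrder (Fin 3)}
    {f : MvPolynomial (Fin 3) k} (hunit : IsUnit (ord.leadingCoeff f))
    (hdegree : ord.degree f = Finsupp.single 0 1 + Finsupp.single 1 1) :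
    ∃ b : Module.Basis ((ℕ × ℕ) ⊕ (ℕ × ℕ)) k (MvPolynomial (Fin 3) k ⧸ Ideal.span {f}),
      (∀ i j, b (.inl (i, j)) = Ideal.Quotient.mk _ (X 0 ^ i * X 2 ^ j)) ∧
        ∀ m n, b (.inr (m, n)) = Ideal.Quotient.mk _ (X 1 ^ (m + 1) * X 2 ^ n) := by
  have hrange : Set.range xyFreeExponent = standardExponents ord f := by
    rw [range_xyFreeExponent, standardExponents, hdegree]
  let e : (ℕ × ℕ) ⊕ (ℕ × ℕ) ≃ standardExponents ord f :=
    (Equiv.ofInjective _ xyFreeExponent_injective).trans (Equiv.setCongr hrange)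
  have hb (a) : (standardMonomialBasis hunit).reindex e.symm a =
      Ideal.Quotient.mk _ (monomial (xyFreeExponent a) 1) := by
    rw [Module.Basis.reindex_apply, Equiv.symm_symm, standardMonomialBasis_apply]
    rfl
  refine ⟨(standardMonomialBasis hunit).reindex e.symm, fun i j ↦ ?_, fun m n ↦ ?_⟩
  · rw [hb, monomial_xyFreeExponent_inl]
  · rw [hb, monomial_xyFreeExponent_inr]

end XYFree

/-- The monomials `x^i z^j` (`i, j ≥ 0`) together with the monomials `y^m z^n`
(`m ≥ 1`, `n ≥ 0`) form an `F2`-basis of `R = F2[x,y,z]/(xy + xz + yz)`. -/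
theorem images_of_monomials_form_basis :
    ∃ b : Module.Basis ((ℕ × ℕ) ⊕ (ℕ × ℕ)) F2 Rring, ⇑b = basisFam := by
  have hxy : (0 : Fin 3) < 1 := by decide
  have hyz : (1 : Fin 3) < 2 := by decide
  obtain ⟨b, hx, hy⟩ := images_of_monomials_form_basis_general
    (lex_monic_pairwise_products (k := F2) hxy hyz ▸ isUnit_one)
    (lex_degree_pairwise_products hxy hyz)
  exact ⟨b, funext fun | .inl (i, j) => hx i j | .inr (m, n) => hy m n⟩

end
end

section
/- Let A = F2[a0, a1, aβ, u0, u1, uβ], let q = a0·u1·uβ + a1·u0·uβ + aβ·u0·u1, and let T' be the localization of A/(q) at the multiplicative set generated by the images of a0, a1, aβ. Then there is an isomorphism of F2-algebras from T' to the Laurent polynomial ring R[a0^{±1}, a1^{±1}, aβ^{±1}] over R = F2[x,y,z]/(xy + xz + yz), which sends (the images of) a0, a1, aβ to the Laurent variables a0, a1, aβ and sends u0 ↦ x·a0, u1 ↦ y·a1, uβ ↦ z·aβ. -/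
/-!
STATEMENT 2: Let `A = F2[a0, a1, aβ, u0, u1, uβ]`, `q = a0·u1·uβ + a1·u0·uβ + aβ·u0·u1`,
and let `T'` be the localization of `A/(q)` at the multiplicative set generated by the
images of `a0, a1, aβ`.  Then `T'` is isomorphic as an `F2`-algebra to the Laurent
polynomial ring `R[a0^{±1}, a1^{±1}, aβ^{±1}]` over `R = F2[x,y,z]/(xy + xz + yz)`,
via an isomorphism sending `a0, a1, aβ` to the Laurent variables and
`u0 ↦ x·a0`, `u1 ↦ y·a1`, `uβ ↦ z·aβ`.
-/

noncomputable section

open MvPolynomial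

/-- The polynomial ring `A = F2[a0, a1, aβ, u0, u1, uβ]` with
`a0 = X 0`, `a1 = X 1`, `aβ = X 2`, `u0 = X 3`, `u1 = X 4`, `uβ = X 5`. -/
abbrev A6 : Type := MvPolynomial (Fin 6) F2

/-- The Euler-class relation `q = a0·u1·uβ + a1·u0·uβ + aβ·u0·u1`. -/
def qrel : A6 := X 0 * X 4 * X 5 + X 1 * X 3 * X 5 + X 2 * X 3 * X 4

/-- The quotient `A/(q)`. -/
abbrev Aq : Type := A6 ⧸ Ideal.span {qrel}

/-- The quotient map `A → A/(q)`. -/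
def aq : A6 →+* Aq := Ideal.Quotient.mk (Ideal.span {qrel})

/-- The multiplicative set generated by the images of `a0, a1, aβ` in `A/(q)`. -/
def Sa : Submonoid Aq := Submonoid.closure {aq (X 0), aq (X 1), aq (X 2)}

/-- `T'`, the localization of `A/(q)` at `a0, a1, aβ`. -/
abbrev T' : Type := Localization Sa

instance : Algebra F2 T' :=
  RingHom.toAlgebra (S := T') ((algebraMap Aq T').comp (algebraMap F2 Aq))

/-- The Laurent polynomial ring `R[a0^{±1}, a1^{±1}, aβ^{±1}]`, modelled as the group
algebra of `ℤ^3` over `R`. -/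
abbrev Laur : Type := AddMonoidAlgebra Rring (Fin 3 →₀ ℤ)

/-- The `i`-th Laurent variable in `R[a0^{±1}, a1^{±1}, aβ^{±1}]`. -/
def lv (i : Fin 3) : Laur := AddMonoidAlgebra.single (Finsupp.single i 1) 1

/-!
Where the `a i` are invertible, `u i` and `x i = u i / a i` determine each other, and
`q(a, u) = a0 a1 aβ (xy + xz + yz)`. Since `a0 a1 aβ` is a unit, `q(a, u) = 0` exactly when
`xy + xz + yz = 0`, so both rings have the same universal property. The argument works for every
pair of polynomials related in this way.
-/

/-- `g` is obtained from `f` by substituting `x = u / a` and clearing denominators by a monomial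
`a ^ m`. To avoid division this is stated as `g(a, x a) = a ^ m f(x)` in `k[a, x]`; the bijection
`e` tells which variables of `g` are the `a i` (left summand) and which are the `u i` (right
summand). -/
def ClearsDenominators {k ι σ : Type*} [CommRing k] (e : ι ⊕ ι ≃ σ)
    (f : MvPolynomial ι k) (g : MvPolynomial σ k) : Prop :=
  ∃ m : ι →₀ ℕ,
    aeval (Sum.elim (fun i ↦ X (.inl i)) (fun i ↦ X (.inr i) * X (.inl i)) ∘ e.symm) g =
      (m.prod fun i n ↦ X (.inl i) ^ n) * (rename .inr f : MvPolynomial (ι ⊕ ι) k)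

/-- The coordinate ring `k[σ] / (p)` of a hypersurface in affine space. -/
abbrev Hypersurface {k σ : Type*} [CommRing k] (p : MvPolynomial σ k) : Type _ :=
  MvPolynomial σ k ⧸ Ideal.span {p}

/-- The Laurent polynomial ring over `R` in variables indexed by `ι`, as the group algebra of the
free abelian group on `ι`. -/
abbrev MvLaurent (ι R : Type*) [CommRing R] : Type _ := AddMonoidAlgebra R (ι →₀ ℤ)

namespace Hypersurface

variable {k σ B : Type*} [CommRing k] [CommRing B] [Algebra k B] {p : MvPolynomial σ k}

/-- The image of the `i`-th variable in `k[σ] / (p)`. -/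
def coord (p : MvPolynomial σ k) (i : σ) : Hypersurface p :=
  Ideal.Quotient.mk _ (X i)

/-- The homomorphism out of `k[σ] / (p)` given by a point of the hypersurface `p = 0`. -/
def lift (x : σ → B) (hx : aeval x p = 0) : Hypersurface p →ₐ[k] B :=
  Ideal.Quotient.liftₐ _ (aeval x) fun _ hr ↦
    (Ideal.span_singleton_le_iff_mem (RingHom.ker (aeval x))).2 hx hr

@[simp]
lemma lift_coord (x : σ → B) (hx : aeval x p = 0) (i : σ) : lift x hx (coord p i) = x i :=
  aeval_X x i

lemma algHom_ext {φ ψ : Hypersurface p →ₐ[k] B} (h : ∀ i, φ (coord p i) = ψ (coord p i)) :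
    φ = ψ :=
  Ideal.Quotient.algHom_ext _ (MvPolynomial.algHom_ext h)

lemma aeval_algHom_coord (φ : Hypersurface p →ₐ[k] B) :
    aeval (fun i ↦ φ (coord p i)) p = 0 := by
  have comp_mk : aeval (fun i ↦ φ (coord p i)) = φ.comp (Ideal.Quotient.mkₐ k _) :=
    MvPolynomial.algHom_ext fun i ↦ aeval_X _ i
  have mk_self : Ideal.Quotient.mkₐ k (Ideal.span {p}) p = 0 :=
    Ideal.Quotient.eq_zero_iff_mem.2 (Ideal.mem_span_singleton_self p)
  rw [comp_mk, AlgHom.comp_apply, mk_self, map_zero]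

end Hypersurface

namespace MvLaurent

variable {k ι R B : Type*} [CommRing k] [CommRing R] [CommRing B] [Algebra k R] [Algebra k B]

/-- The `i`-th Laurent variable, as a unit. -/
def var (R : Type*) [CommRing R] (i : ι) : (MvLaurent ι R)ˣ :=
  (AddMonoidAlgebra.of R (ι →₀ ℤ)).toHomUnits (Multiplicative.ofAdd (Finsupp.single i 1))

/-- The homomorphism `n ↦ ∏ i, a i ^ n i` from `ℤ ^ ι` to the units of `B`. -/
def monomialHom (a : ι → Bˣ) : Multiplicative (ι →₀ ℤ) →* Bˣ :=
  AddMonoidHom.toMultiplicativeLeft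
    (Finsupp.linearCombination ℤ fun i ↦ Additive.ofMul (a i)).toAddMonoidHom

lemma monomialHom_single (a : ι → Bˣ) (i : ι) :
    monomialHom a (Multiplicative.ofAdd (Finsupp.single i 1)) = a i := by
  simp [monomialHom]

/-- The homomorphism out of `R[ℤ ^ ι]` that extends `φ` and sends the variables to the units `a`. -/
def lift (φ : R →ₐ[k] B) (a : ι → Bˣ) : MvLaurent ι R →ₐ[k] B :=
  AddMonoidAlgebra.liftNCAlgHom φ ((Units.coeHom B).comp (monomialHom a)) fun _ _ ↦ .all _ _

lemma lift_algebraMap (φ : R →ₐ[k] B) (a : ι → Bˣ) (r : R) :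
    lift φ a (algebraMap R (MvLaurent ι R) r) = φ r := by
  simp [lift]

@[simp]
lemma lift_var (φ : R →ₐ[k] B) (a : ι → Bˣ) (i : ι) : lift φ a (var R i) = a i := by
  simp [lift, var, monomialHom_single]

lemma algHom_ext {φ ψ : MvLaurent ι R →ₐ[k] B}
    (hR : ∀ r, φ (algebraMap R _ r) = ψ (algebraMap R _ r))
    (hvar : ∀ i : ι, φ (var R i) = ψ (var R i)) : φ = ψ :=
  AddMonoidAlgebra.algHom_ext'
    (Finsupp.mulHom_ext' fun i ↦ MonoidHom.ext_mint (hvar i)) (AlgHom.ext hR)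

end MvLaurent

section Localization

variable {k ι σ B : Type*} [CommRing k] [CommRing B] [Algebra k B] {e : ι ⊕ ι ≃ σ}
  {f : MvPolynomial ι k} {g : MvPolynomial σ k}

lemma ClearsDenominators.aeval_eq_zero_iff (h : ClearsDenominators e f g) (a : ι → Bˣ)
    (x : ι → B) :
    aeval (Sum.elim (fun i ↦ (a i : B)) (fun i ↦ x i * a i) ∘ e.symm) g = 0 ↔ aeval x f = 0 := by
  obtain ⟨m, hm⟩ := h
  let ev : MvPolynomial (ι ⊕ ι) k →ₐ[k] B := aeval (Sum.elim (fun i ↦ (a i : B)) x)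
  have ev_subst : ev.comp (aeval (Sum.elim (fun i ↦ X (.inl i))
      (fun i ↦ X (.inr i) * X (.inl i)) ∘ e.symm)) =
      aeval (Sum.elim (fun i ↦ (a i : B)) (fun i ↦ x i * a i) ∘ e.symm) :=
    MvPolynomial.algHom_ext fun s ↦ by cases hs : e.symm s <;> simp [ev, hs]
  have ev_monomial : ev (m.prod fun i n ↦ X (.inl i) ^ n) = (m.prod fun i n ↦ a i ^ n : Bˣ) := by
    simp [ev, Finsupp.prod]
  have ev_rename : ev (rename .inr f) = aeval x f := by
    simp [ev, aeval_rename, Function.comp_def]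
  rw [← ev_subst, AlgHom.comp_apply, hm, map_mul, ev_monomial, ev_rename, Units.mul_right_eq_zero]

variable (e g) in
/-- The multiplicative set in `k[a, u] / (g)` generated by the `a i`. -/
def denominators : Submonoid (Hypersurface g) :=
  .closure (Set.range fun i ↦ Hypersurface.coord g (e (.inl i)))

lemma isUnit_map_denominators {φ : Hypersurface g →ₐ[k] B}
    (hφ : ∀ i, IsUnit (φ (Hypersurface.coord g (e (.inl i))))) (s : denominators e g) :
    IsUnit (φ s) := by
  have le_comap : denominators e g ≤ (IsUnit.submonoid B).comap φ :=
    Submonoid.closure_le.2 (Set.range_subset_iff.2 hφ)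
  exact le_comap s.2

variable (T : Type*) [CommRing T] [Algebra (Hypersurface g) T] [IsLocalization (denominators e g) T]

variable (e g) in
/-- The unit of `T = (k[a, u] / (g))[a⁻¹]` given by `a i`. -/
def denominatorUnit (i : ι) : Tˣ :=
  (IsLocalization.map_units T
    (⟨_, Submonoid.subset_closure (Set.mem_range_self i)⟩ : denominators e g)).unit

variable (e g) in
/-- The quotient `u i / a i` in `T = (k[a, u] / (g))[a⁻¹]`. -/
def ratio (i : ι) : T :=
  algebraMap _ T (Hypersurface.coord g (e (.inr i))) * ↑(denominatorUnit e g T i)⁻¹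

lemma coe_denominatorUnit (i : ι) :
    (denominatorUnit e g T i : T) = algebraMap _ T (Hypersurface.coord g (e (.inl i))) :=
  rfl

lemma ratio_mul_denominatorUnit (i : ι) :
    ratio e g T i * denominatorUnit e g T i =
      algebraMap _ T (Hypersurface.coord g (e (.inr i))) :=
  Units.inv_mul_cancel_right _ _

variable [Algebra k T] [IsScalarTower k (Hypersurface g) T]

lemma ClearsDenominators.aeval_ratio (h : ClearsDenominators e f g) :
    aeval (ratio e g T) f = 0 := by
  rw [← h.aeval_eq_zero_iff (denominatorUnit e g T)]
  convert Hypersurface.aeval_algHom_coord (IsScalarTower.toAlgHom k (Hypersurface g) T) with s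
  obtain ⟨i | i, rfl⟩ := e.surjective s
  · simp [coe_denominatorUnit]
  · simp [ratio_mul_denominatorUnit]

/-- The homomorphism `x i ↦ u i / a i`, `a i ↦ a i` from `(k[x] / (f))[a, a⁻¹]` to `T`. -/
def ofLaurent (h : ClearsDenominators e f g) : MvLaurent ι (Hypersurface f) →ₐ[k] T :=
  MvLaurent.lift (Hypersurface.lift (ratio e g T) (h.aeval_ratio T)) (denominatorUnit e g T)

lemma ofLaurent_algebraMap_coord (h : ClearsDenominators e f g) (i : ι) :
    ofLaurent T h (algebraMap _ _ (Hypersurface.coord f i)) = ratio e g T i := by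
  rw [ofLaurent, MvLaurent.lift_algebraMap, Hypersurface.lift_coord]

lemma ofLaurent_var (h : ClearsDenominators e f g) (i : ι) :
    ofLaurent T h (MvLaurent.var (Hypersurface f) i) = denominatorUnit e g T i :=
  MvLaurent.lift_var _ _ i

/-- The homomorphism `a i ↦ a i`, `u i ↦ x i a i` from `k[a, u] / (g)` to
`(k[x] / (f))[a, a⁻¹]`. -/
def hypersurfaceToLaurent (h : ClearsDenominators e f g) :
    Hypersurface g →ₐ[k] MvLaurent ι (Hypersurface f) :=
  Hypersurface.lift _ <| (h.aeval_eq_zero_iff (MvLaurent.var _) fun i ↦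
    algebraMap (Hypersurface f) _ (Hypersurface.coord f i)).2 <|
      Hypersurface.aeval_algHom_coord (IsScalarTower.toAlgHom k (Hypersurface f) _)

lemma hypersurfaceToLaurent_inl (h : ClearsDenominators e f g) (i : ι) :
    hypersurfaceToLaurent h (Hypersurface.coord g (e (.inl i))) =
      MvLaurent.var (Hypersurface f) i := by
  simp [hypersurfaceToLaurent]

lemma hypersurfaceToLaurent_inr (h : ClearsDenominators e f g) (i : ι) :
    hypersurfaceToLaurent h (Hypersurface.coord g (e (.inr i))) =
      algebraMap _ _ (Hypersurface.coord f i) *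
        (MvLaurent.var (Hypersurface f) i : MvLaurent ι _) := by
  simp [hypersurfaceToLaurent]

/-- The extension of `hypersurfaceToLaurent` to the localization `T`. -/
def toLaurent (h : ClearsDenominators e f g) : T →ₐ[k] MvLaurent ι (Hypersurface f) :=
  IsLocalization.liftAlgHom (M := denominators e g) (f := hypersurfaceToLaurent h) <|
    isUnit_map_denominators fun i ↦ by
      rw [hypersurfaceToLaurent_inl]
      exact Units.isUnit _

lemma toLaurent_algebraMap (h : ClearsDenominators e f g) (r : Hypersurface g) :
    toLaurent T h (algebraMap _ T r) = hypersurfaceToLaurent h r :=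
  IsLocalization.lift_eq _ r

lemma toLaurent_denominatorUnit (h : ClearsDenominators e f g) (i : ι) :
    toLaurent T h (denominatorUnit e g T i) = MvLaurent.var (Hypersurface f) i :=
  (toLaurent_algebraMap T h _).trans (hypersurfaceToLaurent_inl h i)

lemma toLaurent_ratio (h : ClearsDenominators e f g) (i : ι) :
    toLaurent T h (ratio e g T i) = algebraMap _ _ (Hypersurface.coord f i) := by
  rw [← (MvLaurent.var (Hypersurface f) i).isUnit.mul_left_inj, ← toLaurent_denominatorUnit T h,
    ← map_mul, ratio_mul_denominatorUnit, toLaurent_algebraMap, hypersurfaceToLaurent_inr,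
    toLaurent_denominatorUnit]

lemma toLaurent_comp_ofLaurent (h : ClearsDenominators e f g) :
    (toLaurent T h).comp (ofLaurent T h) = .id k _ := by
  refine MvLaurent.algHom_ext (fun r ↦ ?_) fun i ↦ ?_
  · have on_coefficients : ((toLaurent T h).comp (ofLaurent T h)).comp
        (IsScalarTower.toAlgHom k (Hypersurface f) _) = IsScalarTower.toAlgHom k _ _ :=
      Hypersurface.algHom_ext fun i ↦ by
        rw [AlgHom.comp_apply, AlgHom.comp_apply, IsScalarTower.toAlgHom_apply,
          ofLaurent_algebraMap_coord, toLaurent_ratio]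
    exact DFunLike.congr_fun on_coefficients r
  · rw [AlgHom.comp_apply, ofLaurent_var, toLaurent_denominatorUnit, AlgHom.id_apply]

lemma ofLaurent_comp_toLaurent (h : ClearsDenominators e f g) :
    (ofLaurent T h).comp (toLaurent T h) = .id k T := by
  refine IsLocalization.algHom_ext (denominators e g) (Hypersurface.algHom_ext fun s ↦ ?_)
  obtain ⟨i | i, rfl⟩ := e.surjective s
  · change ofLaurent T h (toLaurent T h (algebraMap _ T _)) = algebraMap _ T _
    rw [toLaurent_algebraMap, hypersurfaceToLaurent_inl, ofLaurent_var, coe_denominatorUnit]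
  · change ofLaurent T h (toLaurent T h (algebraMap _ T _)) = algebraMap _ T _
    rw [toLaurent_algebraMap, hypersurfaceToLaurent_inr, map_mul, ofLaurent_algebraMap_coord,
      ofLaurent_var, ratio_mul_denominatorUnit]

theorem localization_iso_laurent_general (h : ClearsDenominators e f g) :
    ∃ E : T ≃ₐ[k] MvLaurent ι (Hypersurface f),
      (∀ i, E (algebraMap _ T (Hypersurface.coord g (e (.inl i)))) =
        MvLaurent.var (Hypersurface f) i) ∧
      ∀ i, E (algebraMap _ T (Hypersurface.coord g (e (.inr i)))) =
        algebraMap _ _ (Hypersurface.coord f i) *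
          (MvLaurent.var (Hypersurface f) i : MvLaurent ι (Hypersurface f)) :=
  ⟨.ofAlgHom (toLaurent T h) (ofLaurent T h) (toLaurent_comp_ofLaurent T h)
    (ofLaurent_comp_toLaurent T h),
    fun i ↦ (toLaurent_algebraMap T h _).trans (hypersurfaceToLaurent_inl h i),
    fun i ↦ (toLaurent_algebraMap T h _).trans (hypersurfaceToLaurent_inr h i)⟩

end Localization

/-- The splitting of the variables of `A6` into the `a i` and the `u i`. -/
def splitVars : Fin 3 ⊕ Fin 3 ≃ Fin 6 := finSumFinEquiv

lemma clearsDenominators_relP_qrel : ClearsDenominators splitVars relP qrel := by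
  refine ⟨Finsupp.equivFunOnFinite.symm 1, ?_⟩
  have qrel_eq : qrel =
      X (splitVars (.inl 0)) * X (splitVars (.inr 1)) * X (splitVars (.inr 2)) +
      X (splitVars (.inl 1)) * X (splitVars (.inr 0)) * X (splitVars (.inr 2)) +
      X (splitVars (.inl 2)) * X (splitVars (.inr 0)) * X (splitVars (.inr 1)) := rfl
  simp only [qrel_eq, relP, map_add, map_mul, aeval_X, rename_X, Function.comp_apply,
    Equiv.symm_apply_apply, Sum.elim_inl, Sum.elim_inr, Finsupp.prod_fintype, pow_zero,
    implies_true, Fin.prod_univ_three, Finsupp.equivFunOnFinite_symm_apply_apply, Pi.one_apply,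
    pow_one]
  ring

lemma Sa_eq_denominators : Sa = denominators splitVars qrel := by
  refine congrArg Submonoid.closure (Set.ext fun s ↦ ⟨?_, ?_⟩)
  · rintro (rfl | rfl | rfl)
    exacts [⟨0, rfl⟩, ⟨1, rfl⟩, ⟨2, rfl⟩]
  · rintro ⟨i, rfl⟩
    fin_cases i
    exacts [.inl rfl, .inr (.inl rfl), .inr (.inr rfl)]

instance : IsLocalization (denominators splitVars qrel) T' :=
  Sa_eq_denominators ▸ Localization.isLocalization

/-- There is an `F2`-algebra isomorphism
`T' ≅ R[a0^{±1}, a1^{±1}, aβ^{±1}]` sending `a0, a1, aβ` to the Laurent variables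
and `u0 ↦ x·a0`, `u1 ↦ y·a1`, `uβ ↦ z·aβ`. -/
theorem localization_iso_laurent :
    ∃ e : T' ≃ₐ[F2] Laur,
      e (algebraMap Aq T' (aq (X 0))) = lv 0 ∧
      e (algebraMap Aq T' (aq (X 1))) = lv 1 ∧
      e (algebraMap Aq T' (aq (X 2))) = lv 2 ∧
      e (algebraMap Aq T' (aq (X 3))) = algebraMap Rring Laur (pr (X 0)) * lv 0 ∧
      e (algebraMap Aq T' (aq (X 4))) = algebraMap Rring Laur (pr (X 1)) * lv 1 ∧
      e (algebraMap Aq T' (aq (X 5))) = algebraMap Rring Laur (pr (X 2)) * lv 2 := by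
  -- The scalar action of the given `Algebra F2 T'` is not the one Mathlib puts on a localization,
  -- so inference does not find this tower.
  have := IsScalarTower.of_algebraMap_eq' (R := F2) (S := Aq) (A := T') rfl
  obtain ⟨E, ha, hu⟩ := localization_iso_laurent_general T' clearsDenominators_relP_qrel
  exact ⟨E, ha 0, ha 1, ha 2, hu 0, hu 1, hu 2⟩

end
end

section
/- Let A = F2[a0, a1, aβ, u0, u1, uβ], let q = a0·u1·uβ + a1·u0·uβ + aβ·u0·u1, and let T be the localization of A/(q) at the multiplicative set generated by the images of u0, u1, uβ. Set t0 = a0·u0^{-1} and t1 = aβ·uβ^{-1} in T. Then (u0·u1·uβ)·t0·t1·(t0 + t1) = a0·a1·aβ in T. -/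
noncomputable section

open MvPolynomial

/-- The multiplicative set generated by the images of `u0, u1, uβ` in `A/(q)`. -/
def Su : Submonoid Aq := Submonoid.closure {aq (X 3), aq (X 4), aq (X 5)}

/-- `T`, the localization of `A/(q)` at `u0, u1, uβ`. -/
abbrev T : Type := Localization Su

/-- `u0` as an element of the multiplicative set. -/
def u0S : Su := ⟨aq (X 3), Submonoid.subset_closure (by simp)⟩

/-- `u1` as an element of the multiplicative set. -/
def u1S : Su := ⟨aq (X 4), Submonoid.subset_closure (by simp)⟩

/-- `uβ` as an element of the multiplicative set. -/
def uβS : Su := ⟨aq (X 5), Submonoid.subset_closure (by simp)⟩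

/-- `t0 = a0·u0⁻¹` in `T`. -/
def t0 : T := Localization.mk (aq (X 0)) u0S

/-- `t1 = aβ·uβ⁻¹` in `T`. -/
def t1 : T := Localization.mk (aq (X 2)) uβS

/-! Divided by the regular element `u₀ * uβ`, the Euler-class relation becomes the linear relation
`u₁ * (t₀ + t₁) = -a₁`. Multiplying it by `t₀ * u₀ = a₀` and `t₁ * uβ = aβ` gives the identity,
up to a sign that disappears in characteristic two. -/

section CommRing

variable {R : Type*} [CommRing R] {a₀ a₁ aβ u₀ u₁ uβ t₀ t₁ : R}

theorem mul_add_eq_neg_of_euler_relation (hu₀ : IsLeftRegular u₀) (huβ : IsLeftRegular uβ)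
    (ht₀ : t₀ * u₀ = a₀) (ht₁ : t₁ * uβ = aβ)
    (hq : a₀ * u₁ * uβ + a₁ * u₀ * uβ + aβ * u₀ * u₁ = 0) :
    u₁ * (t₀ + t₁) = -a₁ := by
  subst ht₀ ht₁
  apply hu₀.mul huβ
  linear_combination hq

theorem dickson_p0_identity_general (hu₀ : IsLeftRegular u₀) (huβ : IsLeftRegular uβ)
    (ht₀ : t₀ * u₀ = a₀) (ht₁ : t₁ * uβ = aβ)
    (hq : a₀ * u₁ * uβ + a₁ * u₀ * uβ + aβ * u₀ * u₁ = 0) :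
    u₀ * u₁ * uβ * (t₀ * t₁ * (t₀ + t₁)) = -(a₀ * a₁ * aβ) :=
  calc
    u₀ * u₁ * uβ * (t₀ * t₁ * (t₀ + t₁)) = (t₀ * u₀) * (u₁ * (t₀ + t₁)) * (t₁ * uβ) := by ring
    _ = a₀ * -a₁ * aβ := by
      rw [mul_add_eq_neg_of_euler_relation hu₀ huβ ht₀ ht₁ hq, ht₀, ht₁]
    _ = -(a₀ * a₁ * aβ) := by ring

end CommRing

theorem localization_mk_mul_algebraMap {R : Type*} [CommSemiring R] {S : Submonoid R}
    (x : R) (s : S) :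
    Localization.mk x s * algebraMap R (Localization S) s = algebraMap R (Localization S) x := by
  rw [Localization.mk_eq_mk', IsLocalization.mk'_spec]

theorem isUnit_algebraMap_u0 : IsUnit (algebraMap Aq T (aq (X 3))) :=
  IsLocalization.map_units T u0S

theorem isUnit_algebraMap_uβ : IsUnit (algebraMap Aq T (aq (X 5))) :=
  IsLocalization.map_units T uβS

theorem t0_mul_u0 : t0 * algebraMap Aq T (aq (X 3)) = algebraMap Aq T (aq (X 0)) :=
  localization_mk_mul_algebraMap (aq (X 0)) u0S

theorem t1_mul_uβ : t1 * algebraMap Aq T (aq (X 5)) = algebraMap Aq T (aq (X 2)) :=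
  localization_mk_mul_algebraMap (aq (X 2)) uβS

theorem aq_qrel : aq qrel = 0 :=
  Ideal.Quotient.mk_singleton_self qrel

theorem algebraMap_euler_relation :
    algebraMap Aq T (aq (X 0)) * algebraMap Aq T (aq (X 4)) * algebraMap Aq T (aq (X 5)) +
      algebraMap Aq T (aq (X 1)) * algebraMap Aq T (aq (X 3)) * algebraMap Aq T (aq (X 5)) +
      algebraMap Aq T (aq (X 2)) * algebraMap Aq T (aq (X 3)) * algebraMap Aq T (aq (X 4)) = 0 := by
  simpa only [qrel, map_add, map_mul, map_zero] using congrArg (algebraMap Aq T) aq_qrel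

set_option synthInstance.maxHeartbeats 1000000 in
/-- In `T`, `(u0·u1·uβ)·t0·t1·(t0 + t1) = a0·a1·aβ`.  (The element `t0·t1·(t0+t1)` is
the image of the degree-3 Dickson invariant `p0 = t·t'·(t+t')` under `t ↦ t0`, `t' ↦ t1`.) -/
theorem dickson_p0_identity :
    algebraMap Aq T (aq (X 3 * X 4 * X 5)) * (t0 * t1 * (t0 + t1)) =
      algebraMap Aq T (aq (X 0 * X 1 * X 2)) := by
  rw [← CharTwo.neg_eq (X 0 * X 1 * X 2 : A6)]
  simpa only [map_neg, map_mul] using dickson_p0_identity_general (R := T)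
    isUnit_algebraMap_u0.isRegular.left isUnit_algebraMap_uβ.isRegular.left
    t0_mul_u0 t1_mul_uβ algebraMap_euler_relation

end
end

section
/- Let A = F2[a0, a1, aβ, u0, u1, uβ], let q = a0·u1·uβ + a1·u0·uβ + aβ·u0·u1, and let T be the localization of A/(q) at the multiplicative set generated by the images of u0, u1, uβ. Set t0 = a0·u0^{-1} and t1 = aβ·uβ^{-1} in T. Then (u0·u1·uβ)·(t0^2 + t0·t1 + t1^2) = a0·a1·uβ + a1·aβ·u0 + a0·aβ·u1 in T. -/
noncomputable section

open MvPolynomial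

/-!
Dividing `q` by `u0·u1·uβ` gives `a0/u0 + a1/u1 + aβ/uβ = 0`. Whenever `x + y + z = 0`, the form
`x² + xz + z²` is minus the second elementary symmetric polynomial of `x, y, z`; evaluated at the
three fractions and cleared of denominators, the latter becomes `a0·a1·uβ + a1·aβ·u0 + a0·aβ·u1`.
In characteristic two the sign disappears.
-/

theorem sq_add_mul_add_sq_eq_neg_of_add_eq_zero {R : Type*} [CommRing R] {x y z : R}
    (h : x + y + z = 0) : x ^ 2 + x * z + z ^ 2 = -(x * y + y * z + x * z) := by
  linear_combination (x + z) * h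

section Localization

open IsLocalization

variable {R : Type*} [CommRing R] {M : Submonoid R} (S : Type*) [CommRing S] [Algebra R S]
  [IsLocalization M S]

theorem mk'_add_mk'_add_mk'_eq_zero {a b c : R} {u v w : M}
    (h : a * v * w + b * u * w + c * u * v = 0) : mk' S a u + mk' S b v + mk' S c w = 0 := by
  have numerator_eq_zero : (a * v + b * u) * w + c * (u * v : M) = 0 := by
    rw [Submonoid.coe_mul]
    linear_combination h
  rw [← mk'_add, ← mk'_add, numerator_eq_zero, mk'_zero]

theorem algebraMap_mul_mk'_mul_mk'_add (a b c : R) (u v w : M) :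
    algebraMap R S (u * v * w) *
        (mk' S a u * mk' S b v + mk' S b v * mk' S c w + mk' S a u * mk' S c w) =
      algebraMap R S (a * b * w + b * c * u + a * c * v) := by
  simp only [map_add, map_mul, ← mk'_spec S a u, ← mk'_spec S b v, ← mk'_spec S c w]
  ring

theorem dickson_p1_identity_general {a b c : R} {u v w : M}
    (h : a * v * w + b * u * w + c * u * v = 0) :
    algebraMap R S (u * v * w) * (mk' S a u ^ 2 + mk' S a u * mk' S c w + mk' S c w ^ 2) =
      -algebraMap R S (a * b * w + b * c * u + a * c * v) := by
  rw [sq_add_mul_add_sq_eq_neg_of_add_eq_zero (mk'_add_mk'_add_mk'_eq_zero S h), mul_neg,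
    algebraMap_mul_mk'_mul_mk'_add]

end Localization

theorem euler_class_relation :
    aq (X 0) * u1S * uβS + aq (X 1) * u0S * uβS + aq (X 2) * u0S * u1S = 0 := by
  simpa only [qrel, u0S, u1S, uβS, map_add, map_mul] using aq_qrel

set_option synthInstance.maxHeartbeats 1000000 in
/-- In `T`, `(u0·u1·uβ)·(t0² + t0·t1 + t1²) = a0·a1·uβ + a1·aβ·u0 + a0·aβ·u1`.
(The element `t0² + t0·t1 + t1²` is the image of the degree-2 Dickson invariant
`p1 = t² + t·t' + t'²` under `t ↦ t0`, `t' ↦ t1`.) -/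
theorem dickson_p1_identity :
    algebraMap Aq T (aq (X 3 * X 4 * X 5)) * (t0 ^ 2 + t0 * t1 + t1 ^ 2) =
      algebraMap Aq T (aq (X 0 * X 1 * X 5 + X 1 * X 2 * X 3 + X 0 * X 2 * X 4)) := by
  rw [← CharTwo.neg_eq (X 0 * X 1 * X 5 + X 1 * X 2 * X 3 + X 0 * X 2 * X 4 : A6), t0, t1,
    Localization.mk_eq_mk', map_neg, map_neg]
  simpa only [u0S, u1S, uβS, map_add, map_mul] using
    dickson_p1_identity_general T euler_class_relation

end
end
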